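/- There is a constant C > 0 such that for all real y ≥ 2 and all (i, j) ∈ {0,1}² with (i, j) ≠ (0, 0): |Σ 1/√p₈(v,w) − (α₃ + α₄)/(6ζ(2)y^{1/4})| ≤ C·(log y)·y^{−3/8}, where the sum is over integer pairs (v, w) with 1 ≤ v < w, gcd(v, w) = 1, p₈(v,w) > y, v ≡ i (mod 2) and w ≡ j (mod 2). -/

import Mathlib

/-- p₈(v,w) = v⁸ + 14v⁴w⁴ + w⁸, as a real number, for integers v, w. -/
def p8R (v w : ℤ) : ℝ :=
  (v : ℝ) ^ 8 + 14 * (v : ℝ) ^ 4 * (w : ℝ) ^ 4 + (w : ℝ) ^ 8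

/-- p₈(u,1) = u⁸ + 14u⁴ + 1 for real u. -/
def p8u (u : ℝ) : ℝ := u ^ 8 + 14 * u ^ 4 + 1

noncomputable def WfA (v : ℝ) : ℝ := max v (√(√(√(48*v^8+1) - 7*v^4)))

lemma WfA_iff1 {v w : ℝ} (hv : 0 ≤ v) (hw : v < w) :
    v^8+14*v^4*w^4+w^8 ≤ 1 ↔ w ≤ WfA v := by
  have hw0 : 0 < w := lt_of_le_of_lt hv hw
  unfold WfA
  rw [le_max_iff]
  have : ¬ (w ≤ v) := not_le.mpr hw
  simp only [this, false_or]
  rw [Real.le_sqrt' hw0, Real.le_sqrt' (by positivity), le_sub_iff_add_le,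
    Real.le_sqrt' (by positivity)]
  constructor <;> intro h <;> nlinarith [h]

lemma WfA_iff {r v w : ℝ} (hr : 0 < r) (hv : 0 ≤ v) (hw : v < w) :
    v^8+14*v^4*w^4+w^8 ≤ r^8 ↔ w ≤ r * WfA (v / r) := by
  rw [mul_comm r, ← div_le_iff₀ hr, ← WfA_iff1 (by positivity) (by gcongr)]
  have : (v / r) ^ 8 + 14 * (v / r) ^ 4 * (w / r) ^ 4 + (w / r) ^ 8
     = (v^8+14*v^4*w^4+w^8) / r^8 := by field_simp
  rw [this, div_le_one (by positivity)]

lemma WfA_le (v : ℝ) : v ≤ WfA v := le_max_left _ _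

noncomputable def KfA (v : ℝ) : ℝ := WfA v - v

lemma KfA_nonneg (v : ℝ) : 0 ≤ KfA v := by unfold KfA; linarith [WfA_le v]

lemma KfA_anti : AntitoneOn KfA (Set.Ici 0) := by
  intro a ha b hb hab
  simp only [Set.mem_Ici] at ha hb
  rcases (WfA_le b).eq_or_lt with h | h
  · have := KfA_nonneg a
    unfold KfA at *; linarith
  · have h1 := (WfA_iff1 hb h).2 le_rfl
    have h2 : WfA b ≤ WfA a := by
      rw [← WfA_iff1 ha (lt_of_le_of_lt hab h)]
      refine le_trans ?_ h1
      have : 0 ≤ WfA b := hb.trans h.le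
      gcongr
    unfold KfA; linarith

lemma KfA_zero : KfA 0 = 1 := by
  simp [KfA, WfA]

lemma KfA_big {v : ℝ} (hv : 1 ≤ v) : KfA v = 0 := by
  rcases (WfA_le v).eq_or_lt with h | h
  · unfold KfA; linarith
  · exfalso
    have h1 := (WfA_iff1 (by linarith) h).2 le_rfl
    have h3 : 1 ≤ v^8 := one_le_pow₀ hv
    have h4 : 1 ≤ WfA v ^8 := one_le_pow₀ (by linarith)
    have : 0 ≤ 14*v^4*WfA v^4 := by positivity
    linarith

lemma KfA_int (n : ℝ) (hn : 1 ≤ n) : ∫ v in (0:ℝ)..n, KfA v = ∫ v in (0:ℝ)..1, KfA v := by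
  have hI : ∀ a b : ℝ, 0 ≤ a → a ≤ b → IntervalIntegrable KfA MeasureTheory.volume a b := by
    intro a b ha hab
    apply AntitoneOn.intervalIntegrable
    apply KfA_anti.mono
    rw [Set.uIcc_of_le hab]
    intro x hx; exact ha.trans hx.1
  rw [← intervalIntegral.integral_add_adjacent_intervals (hI 0 1 le_rfl zero_le_one)
    (hI 1 n zero_le_one hn)]
  have : ∫ v in (1:ℝ)..n, KfA v = 0 := by
    rw [intervalIntegral.integral_congr (g := fun _ => 0)]
    · simp
    · intro x hx
      rw [Set.uIcc_of_le hn] at hx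
      exact KfA_big hx.1
  rw [this, add_zero]

/-- sum over progression -/
lemma sum_prog (r : ℝ) (hr : 1 ≤ r) (c : ℝ) (hc0 : 0 ≤ c) (hc : c ≤ 2) (n : ℕ) (hn : r ≤ n) :
    |∑ k ∈ Finset.range n, r * KfA ((2*k+c)/r) - r^2 / 2 * ∫ v in (0:ℝ)..1, KfA v| ≤ r := by
  have r0 : 0 < r := by linarith
  set F : ℝ → ℝ := fun t => r * KfA ((2 / r) * t) with hF
  have hFa : AntitoneOn F (Set.Ici 0) := by
    intro a ha b hb hab
    simp only [Set.mem_Ici] at ha hb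
    simp only [hF]
    apply mul_le_mul_of_nonneg_left _ r0.le
    apply KfA_anti
    · simp only [Set.mem_Ici]; positivity
    · simp only [Set.mem_Ici]; positivity
    · gcongr
  have hint : ∫ t in (0:ℝ)..(0 + (n:ℝ)), F t = r^2 / 2 * ∫ v in (0:ℝ)..1, KfA v := by
    simp only [hF]
    rw [intervalIntegral.integral_const_mul, intervalIntegral.integral_comp_mul_left]
    · rw [mul_zero, zero_add, KfA_int]
      · rw [smul_eq_mul]; field_simp
      · rw [div_mul_eq_mul_div, le_div_iff₀ r0]; linarith
    · positivity
  have hm : AntitoneOn F (Set.Icc 0 (0 + (n:ℝ))) := hFa.mono (fun x hx => hx.1)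
  have h1 := hm.integral_le_sum
  have h2 := hm.sum_le_integral
  rw [hint] at h1 h2
  simp only [zero_add] at h1 h2
  have h3 : ∑ k ∈ Finset.range n, F ((k+1 : ℕ):ℝ) ≤ ∑ k ∈ Finset.range n, r * KfA ((2*k+c)/r) := by
    apply Finset.sum_le_sum
    intro k _
    simp only [hF]
    apply mul_le_mul_of_nonneg_left _ r0.le
    apply KfA_anti
    · simp only [Set.mem_Ici]; positivity
    · simp only [Set.mem_Ici]; positivity
    · rw [div_mul_eq_mul_div]; gcongr; push_cast; linarith
  have h4 : ∑ k ∈ Finset.range n, r * KfA ((2*k+c)/r) ≤ ∑ k ∈ Finset.range n, F (k:ℝ) := by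
    apply Finset.sum_le_sum
    intro k _
    simp only [hF]
    apply mul_le_mul_of_nonneg_left _ r0.le
    apply KfA_anti
    · simp only [Set.mem_Ici]; positivity
    · simp only [Set.mem_Ici]; positivity
    · rw [div_mul_eq_mul_div]; gcongr; linarith
  have h5 : ∑ k ∈ Finset.range n, F ((k+1 : ℕ):ℝ) = ∑ k ∈ Finset.range n, F (k:ℝ) + F n - F 0 := by
    have e1 := Finset.sum_range_succ (fun k : ℕ => F (k:ℝ)) n
    have e2 := Finset.sum_range_succ' (fun k : ℕ => F (k:ℝ)) n
    simp only [Nat.cast_zero] at e2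
    linarith
  have h6 : F 0 = r := by simp [hF, KfA_zero]
  have h7 : 0 ≤ F n := mul_nonneg r0.le (KfA_nonneg _)
  rw [abs_le]; constructor <;> linarith

lemma card_prog (v : ℤ) (W : ℝ) (hW : (v:ℝ) ≤ W) (j : ℤ) (hj : j = 0 ∨ j = 1) :
    |(((Finset.Ioc v ⌊W⌋).filter (fun w => w % 2 = j)).card : ℝ) - (W - v)/2| ≤ 2 := by
  have h := Int.Ioc_filter_modEq_card v ⌊W⌋ (r := 2) (by norm_num) j
  have e : (Finset.Ioc v ⌊W⌋).filter (fun w => w ≡ j [ZMOD 2]) =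
    (Finset.Ioc v ⌊W⌋).filter (fun w => w % 2 = j) := by
    apply Finset.filter_congr
    intro x _
    unfold Int.ModEq
    omega
  rw [e] at h
  have h' : (((Finset.Ioc v ⌊W⌋).filter (fun w => w % 2 = j)).card : ℝ) = 
    ((max (⌊((⌊W⌋:ℤ) - j : ℚ) / (2:ℤ)⌋ - ⌊(v - j : ℚ) / (2:ℤ)⌋) 0 : ℤ) : ℝ) := by
    rw [← h]; push_cast; rfl
  have key : ∀ a : ℤ, ⌊(a - j : ℚ) / (2:ℤ)⌋ = (a - j) / 2 := by
    intro a
    have := Rat.floor_intCast_div_natCast (a - j) 2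
    push_cast at this ⊢
    exact_mod_cast this
  rw [key, key] at h'
  rw [h']
  have hf : v ≤ ⌊W⌋ := Int.le_floor.2 hW
  have l1 := Int.floor_le W
  have l2 := Int.lt_floor_add_one W
  generalize ⌊W⌋ = f at *
  have hm : ∃ m : ℤ, max ((f - j) / 2 - (v - j) / 2) 0 = m ∧ 2 * m ≤ f - v + 1 ∧ f - v - 1 ≤ 2*m :=
    ⟨_, rfl, by omega, by omega⟩
  obtain ⟨m, hm, m1, m2⟩ := hm
  rw [hm]
  have m1' : (2:ℝ) * m ≤ f - v + 1 := by exact_mod_cast m1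
  have m2' : (f:ℝ) - v - 1 ≤ 2*m := by exact_mod_cast m2
  rw [abs_le]; constructor <;> linarith

open Classical in
noncomputable def PfA (i j : ℤ) (r : ℝ) : Finset (ℤ × ℤ) :=
  ((Finset.Icc 1 ⌊r⌋) ×ˢ (Finset.Icc 1 ⌊r⌋)).filter
    (fun q => q.1 < q.2 ∧ q.1 % 2 = i ∧ q.2 % 2 = j ∧ p8R q.1 q.2 ≤ r ^ 8)

lemma mem_PfA {i j : ℤ} {r : ℝ} (hr : 0 ≤ r) (q : ℤ × ℤ) : q ∈ PfA i j r ↔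
    1 ≤ q.1 ∧ q.1 < q.2 ∧ q.1 % 2 = i ∧ q.2 % 2 = j ∧ p8R q.1 q.2 ≤ r ^ 8 := by
  unfold PfA
  simp only [Finset.mem_filter, Finset.mem_product, Finset.mem_Icc]
  constructor
  · rintro ⟨⟨⟨h1, h2⟩, h3, h4⟩, h5⟩
    exact ⟨h1, h5⟩
  · rintro ⟨h1, h2, h3⟩
    have hw : (0:ℝ) ≤ q.2 := by exact_mod_cast (by omega : (0:ℤ) ≤ q.2)
    have hv : (0:ℝ) ≤ q.1 := by exact_mod_cast (by omega : (0:ℤ) ≤ q.1)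
    have h4 : q.2 ≤ ⌊r⌋ := by
      rw [Int.le_floor]
      have h5 := h3.2.2
      unfold p8R at h5
      have : (q.2 : ℝ)^8 ≤ r^8 := by
        have : 0 ≤ (q.1 : ℝ) ^ 8 + 14 * (q.1 : ℝ) ^ 4 * (q.2 : ℝ) ^ 4 := by positivity
        linarith
      exact le_of_pow_le_pow_left₀ (by norm_num) hr this
    exact ⟨⟨⟨h1, by omega⟩, by omega, h4⟩, h2, h3⟩

lemma PfA_empty {i j : ℤ} {r : ℝ} (hr1 : r < 1) : PfA i j r = ∅ := by
  unfold PfA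
  have : ⌊r⌋ < 1 := by rw [Int.floor_lt]; simpa using hr1
  rw [Finset.Icc_eq_empty (by omega)]
  simp

noncomputable def aA : ℝ := ∫ v in (0:ℝ)..1, KfA v

lemma PfA_card {i j : ℤ} (hi : i = 0 ∨ i = 1) (hj : j = 0 ∨ j = 1) {r : ℝ} (hr : 1 ≤ r) :
    |((PfA i j r).card : ℝ) - aA / 4 * r^2| ≤ 6 * r := by
  have r0 : 0 < r := by linarith
  set n := ⌈r⌉₊ with hn
  have hn1 : r ≤ n := Nat.le_ceil r
  have hn2 : (n:ℝ) < r + 1 := Nat.ceil_lt_add_one r0.le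
  set c : ℤ := 2 - i with hc
  have hsum : (PfA i j r).card = ∑ k ∈ Finset.range n,
      ((PfA i j r).filter (fun q => ((q.1 - c)/2).toNat = k)).card := by
    apply Finset.card_eq_sum_card_fiberwise
    intro q hq
    have hq' := (mem_PfA r0.le q).1 hq
    have : q.2 ≤ ⌊r⌋ := by
      have : q ∈ PfA i j r := hq
      simp only [PfA, Finset.mem_filter, Finset.mem_product, Finset.mem_Icc] at this
      omega
    have h1 : (q.2 : ℝ) ≤ n := (Int.le_floor.1 this).trans hn1
    have h2 : q.2 ≤ (n:ℤ) := by exact_mod_cast h1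
    simp only [Finset.coe_range, Set.mem_Iio]
    omega
  have hfib : ∀ k : ℕ, |(((PfA i j r).filter (fun q => ((q.1 - c)/2).toNat = k)).card : ℝ)
      - (r * KfA ((2*k+(c:ℝ))/r)) / 2| ≤ 2 := by
    intro k
    set v : ℤ := 2 * k + c with hv
    have hv1 : 1 ≤ v := by omega
    have hv1' : (1:ℝ) ≤ v := by exact_mod_cast hv1
    have hvc : (2*k+(c:ℝ)) = (v:ℝ) := by rw [hv]; push_cast; rfl
    rw [hvc]
    have hcard : ((PfA i j r).filter (fun q => ((q.1 - c)/2).toNat = k)).card =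
      ((Finset.Ioc v ⌊r * WfA (v/r)⌋).filter (fun w => w % 2 = j)).card := by
      apply Finset.card_nbij' (fun q => q.2) (fun w => (v, w))
      · intro q hq
        simp only [Finset.coe_filter, mem_PfA r0.le, Set.mem_ofPred_eq] at hq
        obtain ⟨⟨h1, h2, h3, h4, h5⟩, h6⟩ := hq
        have hqv : q.1 = v := by omega
        simp only [Finset.coe_filter, Finset.mem_Ioc, Set.mem_ofPred_eq]
        refine ⟨⟨by omega, ?_⟩, h4⟩
        rw [Int.le_floor, ← WfA_iff r0 (by linarith) (by exact_mod_cast (by omega : v < q.2))]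
        rw [hqv] at h5; exact h5
      · intro w hw
        simp only [Finset.coe_filter, Finset.mem_Ioc, Set.mem_ofPred_eq] at hw
        obtain ⟨⟨h1, h2⟩, h3⟩ := hw
        rw [Int.le_floor, ← WfA_iff r0 (by linarith) (by exact_mod_cast h1)] at h2
        simp only [Finset.coe_filter, mem_PfA r0.le, Set.mem_ofPred_eq]
        exact ⟨⟨hv1, h1, by omega, h3, h2⟩, by omega⟩
      · intro q hq
        simp only [Finset.coe_filter, mem_PfA r0.le, Set.mem_ofPred_eq] at hq
        obtain ⟨⟨h1, h2, h3, h4, h5⟩, h6⟩ := hq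
        have hqv : q.1 = v := by omega
        ext
        · exact hqv.symm
        · rfl
      · intro w hw
        rfl
    rw [hcard]
    have hK : r * KfA (v/r) = r * WfA (v/r) - v := by
      unfold KfA; field_simp
    rw [hK]
    apply card_prog _ _ _ _ hj
    have := mul_nonneg r0.le (KfA_nonneg (v/r))
    linarith
  have hp := sum_prog r hr (c:ℝ) (by exact_mod_cast (by omega : 0 ≤ c))
    (by exact_mod_cast (by omega : c ≤ 2)) n hn1
  have h1 : |((PfA i j r).card : ℝ) - ∑ k ∈ Finset.range n, (r * KfA ((2*k+(c:ℝ))/r)) / 2| ≤ 2 * n := by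
    rw [hsum]; push_cast
    rw [← Finset.sum_sub_distrib]
    refine (Finset.abs_sum_le_sum_abs _ _).trans ?_
    refine (Finset.sum_le_sum (fun k _ => hfib k)).trans ?_
    simp [mul_comm]
  rw [← Finset.sum_div] at h1
  change |_ - r^2/2 * aA| ≤ r at hp
  rw [abs_le] at *
  constructor <;> linarith

section part_c
open ArithmeticFunction

lemma moeb_ind (n : ℕ) : ∑ d ∈ n.divisors, moebius d = if n = 1 then 1 else 0 := by
  rw [← coe_mul_zeta_apply, moebius_mul_coe_zeta, one_apply]

open Classical in
noncomputable def QfA (i j : ℤ) (r : ℝ) : Finset (ℤ × ℤ) :=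
  (PfA i j r).filter (fun q => Int.gcd q.1 q.2 = 1)

lemma QfA_card {i j : ℤ} (hij : ¬(i = 0 ∧ j = 0)) (hi : i = 0 ∨ i = 1) (hj : j = 0 ∨ j = 1)
    {r : ℝ} (hr : 0 < r) :
    ((QfA i j r).card : ℤ) = ∑ d ∈ (Finset.Icc 1 ⌊r⌋₊).filter (fun d => d % 2 = 1),
      moebius d * ((PfA i j (r / d)).card : ℤ) := by
  unfold QfA
  rw [Finset.card_filter]
  push_cast
  have h1 : ∀ q ∈ PfA i j r, (if Int.gcd q.1 q.2 = 1 then (1:ℤ) else 0) =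
      ∑ d ∈ (Finset.Icc 1 ⌊r⌋₊).filter (fun d => d % 2 = 1),
        if d ∣ Int.gcd q.1 q.2 then moebius d else 0 := by
    intro q hq
    have hq' := (mem_PfA hr.le q).1 hq
    have hb : 1 ≤ q.1 ∧ q.1 ≤ ⌊r⌋ := by
      simp only [PfA, Finset.mem_filter, Finset.mem_product, Finset.mem_Icc] at hq
      omega
    have hg0 : Int.gcd q.1 q.2 ≠ 0 := by
      rw [Ne, Int.gcd_eq_zero_iff]; omega
    rw [← moeb_ind _, ← Finset.sum_filter]
    apply Finset.sum_congr _ (fun _ _ => rfl)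
    ext d
    simp only [Nat.mem_divisors, Finset.mem_filter, Finset.mem_Icc]
    constructor
    · rintro ⟨hd, -⟩
      have d1 : (d:ℤ) ∣ q.1 := (Int.natCast_dvd_natCast.2 hd).trans (Int.gcd_dvd_left ..)
      have d2 : (d:ℤ) ∣ q.2 := (Int.natCast_dvd_natCast.2 hd).trans (Int.gcd_dvd_right ..)
      refine ⟨⟨⟨Nat.pos_of_dvd_of_pos hd (Nat.pos_of_ne_zero hg0), ?_⟩, ?_⟩, hd⟩
      · rw [Nat.le_floor_iff hr.le]
        have := Int.le_of_dvd (by omega) d1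
        have h3 : (d:ℤ) ≤ ⌊r⌋ := by omega
        simpa using Int.le_floor.1 h3
      · by_contra h
        have h2 : (2:ℤ) ∣ d := by omega
        have := h2.trans d1
        have := h2.trans d2
        omega
    · rintro ⟨-, hd⟩
      exact ⟨hd, hg0⟩
  rw [Finset.sum_congr rfl h1, Finset.sum_comm]
  apply Finset.sum_congr rfl
  intro d hd
  simp only [Finset.mem_filter, Finset.mem_Icc] at hd
  have d0 : (0:ℝ) < d := by exact_mod_cast hd.1.1
  have d0' : (0:ℤ) < d := by exact_mod_cast hd.1.1
  rw [← Finset.sum_filter, Finset.sum_const, nsmul_eq_mul, mul_comm]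
  congr 2
  have key : ∀ a b : ℤ, p8R (d * a) (d * b) = d^8 * p8R a b := by
    intro a b; unfold p8R; push_cast; ring
  have hrd : 0 ≤ r / d := by positivity
  have keyle : ∀ a b : ℤ, p8R (d * a) (d * b) ≤ r^8 ↔ p8R a b ≤ (r/d)^8 := by
    intro a b
    rw [key, div_pow, le_div_iff₀ (by positivity), mul_comm]
  have podd : ∀ a : ℤ, (d * a) % 2 = a % 2 := by
    intro a
    rw [Int.mul_emod]
    have : (d:ℤ) % 2 = 1 := by omega
    rw [this, one_mul, Int.emod_emod_of_dvd _ (dvd_refl 2)]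
  symm
  apply Finset.card_bij (fun q _ => ((d:ℤ) * q.1, (d:ℤ) * q.2))
  · intro q hq
    obtain ⟨h1, h2, h3, h4, h5⟩ := (mem_PfA hrd q).1 hq
    rw [Finset.mem_filter, mem_PfA hr.le]
    refine ⟨⟨by nlinarith, by nlinarith, by rw [podd]; exact h3, by rw [podd]; exact h4,
      (keyle _ _).2 h5⟩, ?_⟩
    rw [Int.gcd_mul_left]
    simp
  · rintro ⟨a, b⟩ _ ⟨a', b'⟩ _ h
    simp only [Prod.mk.injEq] at h ⊢
    exact ⟨mul_left_cancel₀ d0'.ne' h.1, mul_left_cancel₀ d0'.ne' h.2⟩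
  · rintro ⟨a, b⟩ hq
    rw [Finset.mem_filter, mem_PfA hr.le] at hq
    obtain ⟨⟨h1, h2, h3, h4, h5⟩, hd⟩ := hq
    obtain ⟨a', ha⟩ : (d:ℤ) ∣ a := (Int.natCast_dvd_natCast.2 hd).trans (Int.gcd_dvd_left ..)
    obtain ⟨b', hb⟩ : (d:ℤ) ∣ b := (Int.natCast_dvd_natCast.2 hd).trans (Int.gcd_dvd_right ..)
    subst ha hb
    refine ⟨(a', b'), ?_, rfl⟩
    rw [mem_PfA hrd]
    simp only at h1 h2 h3 h4 h5
    rw [podd] at h3 h4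
    refine ⟨?_, ?_, h3, h4, (keyle _ _).1 h5⟩
    · show 1 ≤ a'
      by_contra h; nlinarith
    · show a' < b'
      by_contra h; nlinarith

noncomputable def mo (d : ℕ) : ℝ := if d % 2 = 1 then (moebius d : ℝ) else 0

lemma mo_abs (d : ℕ) : |mo d| ≤ 1 := by
  unfold mo
  split_ifs
  · exact_mod_cast abs_moebius_le_one
  · simp

lemma mo_summable : Summable (fun d : ℕ => mo d / d^2) := by
  apply Summable.of_norm_bounded (g := fun d : ℕ => 1 / (d:ℝ)^2)
  · exact Real.summable_one_div_nat_pow.2 (by norm_num)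
  · intro d
    rw [Real.norm_eq_abs, abs_div, abs_of_nonneg (by positivity : (0:ℝ) ≤ (d:ℝ)^2)]
    gcongr
    exact mo_abs d

lemma mo_tsum (z2 : ℝ) (hz2 : (z2 : ℂ) = riemannZeta 2) :
    ∑' d : ℕ, mo d / d^2 = 4 / (3 * z2) := by
  have hs : 1 < (2:ℂ).re := by norm_num
  have h1 := DirichletCharacter.LSeries.mul_mu_eq_one (1 : DirichletCharacter ℂ 2) hs
  rw [← DirichletCharacter.LFunction_eq_LSeries _ hs] at h1
  have h2 := DirichletCharacter.LFunctionTrivChar_eq_mul_riemannZeta (N := 2) (s := 2) (by norm_num)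
  unfold DirichletCharacter.LFunctionTrivChar at h2
  rw [h2, ← hz2, Nat.Prime.primeFactors Nat.prime_two] at h1
  have h3 : LSeries ((fun n : ℕ => (1 : DirichletCharacter ℂ 2) n) * fun n => ((moebius n : ℤ) : ℂ)) 2
    = ((∑' d : ℕ, mo d / d^2 : ℝ) : ℂ) := by
    unfold LSeries
    rw [Complex.ofReal_tsum]
    apply tsum_congr
    intro n
    rcases Nat.eq_zero_or_pos n with h | h
    · subst h; simp
    · rw [LSeries.term_of_ne_zero h.ne']
      have : (n:ℂ)^(2:ℂ) = (n:ℂ)^2 := by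
        rw [← Complex.cpow_natCast]; norm_num
      rw [this]
      push_cast
      congr 1
      unfold mo
      simp only [Pi.mul_apply]
      split_ifs with hn
      · have : IsUnit ((n:ℕ) : ZMod 2) := by
          rw [ZMod.isUnit_iff_coprime]
          exact (Nat.coprime_two_right).2 (Nat.odd_iff.2 hn)
        rw [MulChar.one_apply this]; push_cast; ring
      · have : ¬ IsUnit ((n:ℕ) : ZMod 2) := by
          rw [ZMod.isUnit_iff_coprime]
          intro h
          exact hn (Nat.odd_iff.1 ((Nat.coprime_two_right).1 h))
        rw [MulChar.map_nonunit _ this]; simp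
  rw [h3] at h1
  have e : (2:ℂ)^(-2:ℂ) = 1/4 := by
    rw [Complex.cpow_neg]
    have : (2:ℂ)^(2:ℂ) = (2:ℂ)^2 := by
      rw [← Complex.cpow_natCast]; norm_num
    rw [this]; norm_num
  simp only [Finset.prod_singleton, Nat.cast_ofNat, e] at h1
  generalize (∑' d : ℕ, mo d / (d:ℝ)^2) = T at h1 ⊢
  have h4 : (1 - 1/4) * z2 * T = 1 := by
    apply Complex.ofReal_injective
    push_cast
    exact h1
  have hz : z2 ≠ 0 := by
    rintro rfl; simp at h4
  field_simp
  linarith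

lemma mo_tail (n : ℕ) (hn : 1 ≤ n) :
    |∑ d ∈ Finset.range (n+1), mo d / d^2 - ∑' d : ℕ, mo d / d^2| ≤ 1 / n := by
  have ht := mo_summable.hasSum.tendsto_sum_nat
  have ht2 : Filter.Tendsto (fun m => |∑ d ∈ Finset.range (n+1), mo d / d^2 - ∑ d ∈ Finset.range m, mo d / d^2|)
    Filter.atTop (nhds |∑ d ∈ Finset.range (n+1), mo d / d^2 - ∑' d : ℕ, mo d / d^2|) :=
    (tendsto_const_nhds.sub ht).abs
  apply le_of_tendsto ht2
  filter_upwards [Filter.eventually_ge_atTop (n+1)] with m hm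
  rw [abs_sub_comm, Finset.sum_range_sub_sum_range hm]
  refine (Finset.abs_sum_le_sum_abs _ _).trans ?_
  have : ∀ d ∈ (Finset.range m).filter (fun k => n + 1 ≤ k), |mo d / (d:ℝ)^2| ≤ ((d:ℝ)^2)⁻¹ := by
    intro d _
    rw [abs_div, abs_of_nonneg (by positivity : (0:ℝ) ≤ (d:ℝ)^2), ← one_div]
    gcongr
    exact mo_abs d
  refine (Finset.sum_le_sum this).trans ?_
  have e : (Finset.range m).filter (fun k => n + 1 ≤ k) = Finset.Ioc n (m-1) := by
    ext x; simp; omega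
  rw [e]
  refine (sum_Ioc_inv_sq_le_sub (by omega) (by omega)).trans ?_
  rw [one_div]
  have : (0:ℝ) ≤ ((m-1 : ℕ):ℝ)⁻¹ := by positivity
  linarith

lemma QfA_asymp {i j : ℤ} (hij : ¬(i = 0 ∧ j = 0)) (hi : i = 0 ∨ i = 1) (hj : j = 0 ∨ j = 1)
    (z2 : ℝ) (hz2 : (z2 : ℂ) = riemannZeta 2)  {r : ℝ} (hr : 1 ≤ r) :
    |((QfA i j r).card : ℝ) - aA / (3 * z2) * r^2| ≤ 6 * r * (1 + Real.log r) + |aA| * r := by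
  have r0 : 0 < r := by linarith
  set n := ⌊r⌋₊ with hn
  have hn1 : 1 ≤ n := by rw [hn, Nat.one_le_floor_iff]; exact hr
  have hn2 : (n:ℝ) ≤ r := Nat.floor_le r0.le
  have hn3 : r < n + 1 := Nat.lt_floor_add_one r
  have hc : ((QfA i j r).card : ℝ) = ∑ d ∈ Finset.Icc 1 n, mo d * ((PfA i j (r / d)).card : ℝ) := by
    have := QfA_card hij hi hj r0
    have h2 : ((QfA i j r).card : ℝ) = (((QfA i j r).card : ℤ) : ℝ) := by simp
    rw [h2, this, Finset.sum_filter]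
    push_cast
    apply Finset.sum_congr rfl
    intro d _
    unfold mo
    split_ifs <;> simp
  have hm : ∑ d ∈ Finset.range (n+1), mo d / d^2 = ∑ d ∈ Finset.Icc 1 n, mo d / (d:ℝ)^2 := by
    symm
    apply Finset.sum_subset
    · intro x hx; rw [Finset.mem_Icc] at hx; rw [Finset.mem_range]; omega
    · intro x hx hx2
      have : x = 0 := by rw [Finset.mem_range] at hx; rw [Finset.mem_Icc] at hx2; omega
      subst this; simp
  have ht := mo_tail n hn1
  rw [mo_tsum z2 hz2, hm] at ht
  have h1 : |((QfA i j r).card : ℝ) - aA / 4 * r^2 * ∑ d ∈ Finset.Icc 1 n, mo d / (d:ℝ)^2|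
      ≤ 6 * r * (1 + Real.log r) := by
    rw [hc, Finset.mul_sum, ← Finset.sum_sub_distrib]
    refine (Finset.abs_sum_le_sum_abs _ _).trans ?_
    have hh := harmonic_floor_le_one_add_log r hr
    have : ∀ d ∈ Finset.Icc 1 n, |mo d * ((PfA i j (r / d)).card : ℝ) - aA / 4 * r^2 * (mo d / (d:ℝ)^2)|
      ≤ 6 * r * (d:ℝ)⁻¹ := by
      intro d hd
      rw [Finset.mem_Icc] at hd
      have d0 : (0:ℝ) < d := by exact_mod_cast hd.1
      have dr : (d:ℝ) ≤ r := le_trans (by exact_mod_cast hd.2) hn2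
      have e : mo d * ((PfA i j (r / d)).card : ℝ) - aA / 4 * r^2 * (mo d / (d:ℝ)^2)
        = mo d * (((PfA i j (r / d)).card : ℝ) - aA / 4 * (r/d)^2) := by field_simp
      rw [e, abs_mul]
      have := PfA_card hi hj (r := r / d) (by rw [le_div_iff₀ d0]; linarith)
      calc _ ≤ 1 * (6 * (r / d)) := mul_le_mul (mo_abs d) this (abs_nonneg _) zero_le_one
        _ = _ := by field_simp
    refine (Finset.sum_le_sum this).trans ?_
    rw [← Finset.mul_sum]
    apply mul_le_mul_of_nonneg_left _ (by positivity)
    refine le_trans (le_of_eq ?_) hh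
    rw [harmonic_eq_sum_Icc]
    push_cast
    rfl
  have h2 : |aA / 4 * r^2 * ∑ d ∈ Finset.Icc 1 n, mo d / (d:ℝ)^2 - aA / (3 * z2) * r^2| ≤ |aA| * r := by
    have e : aA / 4 * r^2 * ∑ d ∈ Finset.Icc 1 n, mo d / (d:ℝ)^2 - aA / (3 * z2) * r^2 =
      aA * (r^2 / 4) * (∑ d ∈ Finset.Icc 1 n, mo d / (d:ℝ)^2 - 4 / (3 * z2)) := by ring
    rw [e, abs_mul, abs_mul, abs_of_nonneg (by positivity : 0 ≤ r^2/4), mul_assoc]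
    apply mul_le_mul_of_nonneg_left _ (abs_nonneg _)
    calc _ ≤ r^2 / 4 * (1/n) := mul_le_mul_of_nonneg_left ht (by positivity)
      _ ≤ r := by
        have n1 : (1:ℝ) ≤ n := by exact_mod_cast hn1
        rw [mul_one_div, div_le_iff₀ (by linarith)]
        nlinarith
  calc _ = |(((QfA i j r).card : ℝ) - aA / 4 * r^2 * ∑ d ∈ Finset.Icc 1 n, mo d / (d:ℝ)^2) + 
      (aA / 4 * r^2 * ∑ d ∈ Finset.Icc 1 n, mo d / (d:ℝ)^2 - aA / (3 * z2) * r^2)| := by ring_nf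
    _ ≤ _ := (abs_add_le _ _).trans (add_le_add h1 h2)
end part_c

section part_d
open MeasureTheory Set

lemma integrable_of_bdd (f : ℝ × ℝ → ℝ) (hf : Measurable f) (a b c d : ℝ) (C : ℝ)
    (hb : ∀ x ∈ uIoc a b ×ˢ uIoc c d, |f x| ≤ C) : IntegrableOn f (uIoc a b ×ˢ uIoc c d) := by
  apply Measure.integrableOn_of_bounded (M := C)
  · rw [Measure.volume_eq_prod, Measure.prod_prod]
    simp [uIoc]
    exact (ENNReal.mul_lt_top ENNReal.ofReal_lt_top ENNReal.ofReal_lt_top).ne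
  · exact hf.aestronglyMeasurable
  · apply (ae_restrict_iff' (measurableSet_uIoc.prod measurableSet_uIoc)).2
    exact Filter.Eventually.of_forall (fun x hx => hb x hx)

/-- integral of indicator of `t ≤ c` -/
lemma int_ind (a b c : ℝ) (h1 : a ≤ c) (h2 : c ≤ b) (h : ℝ → ℝ) (hc : Continuous h) :
    ∫ t in a..b, (if t ≤ c then h t else 0) = ∫ t in a..c, h t := by
  have i1 : EqOn (fun t => if t ≤ c then h t else 0) h (uIoc a c) := by
    intro t ht
    rw [uIoc_of_le h1] at ht
    simp [ht.2]
  have i2 : EqOn (fun t => if t ≤ c then h t else 0) (fun _ => (0:ℝ)) (uIoc c b) := by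
    intro t ht
    rw [uIoc_of_le h2] at ht
    simp [ht.1]
  rw [← intervalIntegral.integral_add_adjacent_intervals (b := c)]
  · rw [intervalIntegral.integral_congr_ae (g := h) (Filter.Eventually.of_forall i1),
      intervalIntegral.integral_congr_ae (g := fun _ => 0) (Filter.Eventually.of_forall i2)]
    simp
  · exact (intervalIntegrable_congr i1).2 (hc.intervalIntegrable _ _)
  · exact (intervalIntegrable_congr i2).2 (continuous_const.intervalIntegrable _ _)

lemma int_ind' (a b c : ℝ) (h1 : a ≤ c) (h2 : c ≤ b) (h : ℝ → ℝ) (hc : Continuous h) :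
    ∫ t in a..b, (if c < t then h t else 0) = ∫ t in c..b, h t := by
  have e : ∀ t, (if c < t then h t else 0) = h t - (if t ≤ c then h t else 0) := by
    intro t
    by_cases ht : t ≤ c
    · simp [ht, not_lt.2 ht]
    · simp [ht, not_le.1 ht]
  simp_rw [e]
  rw [intervalIntegral.integral_sub (hc.intervalIntegrable _ _), int_ind a b c h1 h2 h hc]
  · rw [intervalIntegral.integral_interval_sub_left (hc.intervalIntegrable _ _)
      (hc.intervalIntegrable _ _)]
  · rw [intervalIntegrable_iff]
    apply Integrable.mono (intervalIntegrable_iff.1 (hc.intervalIntegrable a b))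
    · exact (Measurable.ite measurableSet_Iic hc.measurable measurable_const).aestronglyMeasurable
    · refine Filter.Eventually.of_forall (fun t => ?_)
      split_ifs
      · exact le_rfl
      · simp

noncomputable def qA (u : ℝ) : ℝ := √(√(p8u u))

lemma p8u_pos (u : ℝ) : 1 ≤ p8u u := by unfold p8u; nlinarith [sq_nonneg (u^4), sq_nonneg (u^2)]
lemma p8u_cont : Continuous p8u := by unfold p8u; fun_prop
lemma qA_cont : Continuous qA := by unfold qA; have := p8u_cont; fun_prop
lemma qA_ge (u : ℝ) : 1 ≤ qA u := by
  unfold qA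
  rw [Real.one_le_sqrt, Real.one_le_sqrt]
  exact p8u_pos u
lemma qA_pow (u : ℝ) : qA u ^ 4 = p8u u := by
  unfold qA
  rw [show (4:ℕ) = 2 * 2 from rfl, pow_mul, Real.sq_sqrt (by positivity), Real.sq_sqrt]
  linarith [p8u_pos u]
lemma qA_sq (u : ℝ) : √(p8u u) = qA u ^ 2 := by
  unfold qA
  rw [Real.sq_sqrt (by positivity)]
lemma qA_le {u : ℝ} (h0 : 0 ≤ u) (h1 : u ≤ 1) : qA u ≤ 2 := by
  apply le_of_pow_le_pow_left₀ (n := 4) (by norm_num) (by norm_num)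
  rw [qA_pow]; unfold p8u
  have := pow_le_one₀ (n := 8) h0 h1
  have := pow_le_one₀ (n := 4) h0 h1
  linarith

lemma alpha_sum (α₃ α₄ : ℝ) (g : ℝ → ℝ)
    (hg : ∀ t, g t = (Real.sqrt (t ^ 4 + 48) - 7) ^ ((1 : ℝ) / 4))
    (hα₃ : α₃ = ∫ u in (0 : ℝ)..1, 1 / Real.sqrt (p8u u))
    (hα₄ : α₄ = ∫ t in (1 : ℝ)..2, ∫ u in g t..1, 1 / Real.sqrt (p8u u)) :
    α₃ + α₄ = ∫ u in (0:ℝ)..1, 1 / qA u := by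
  have hfc : Continuous (fun u => 1 / √(p8u u)) := by
    apply Continuous.div continuous_const (p8u_cont.sqrt)
    intro u; rw [qA_sq]; have := qA_ge u; positivity
  have hqc : Continuous (fun u => 1 / qA u) := by
    apply Continuous.div continuous_const qA_cont
    intro u; have := qA_ge u; positivity
  have hgt : ∀ t : ℝ, 1 ≤ t → t ≤ 2 → 0 ≤ g t ∧ g t ≤ 1 ∧ ∀ u, 0 ≤ u → (g t < u ↔ t < qA u) := by
    intro t h1 h2
    have e1 : 7 ≤ √(t^4+48) := by
      apply Real.le_sqrt_of_sq_le
      have : 1 ≤ t^4 := one_le_pow₀ h1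
      linarith
    have e2 : √(t^4+48) ≤ 8 := by
      rw [Real.sqrt_le_left (by norm_num)]
      have : t^4 ≤ 2^4 := by gcongr
      linarith
    have g0 : 0 ≤ g t := by rw [hg]; apply Real.rpow_nonneg; linarith
    have g4 : g t ^ 4 = √(t^4+48) - 7 := by
      rw [hg, ← Real.rpow_natCast, ← Real.rpow_mul (by linarith)]; norm_num
    refine ⟨g0, ?_, ?_⟩
    · apply le_of_pow_le_pow_left₀ (n := 4) (by norm_num) (by norm_num)
      rw [g4]; linarith
    · intro u hu
      have q0 : 0 ≤ qA u := by linarith [qA_ge u]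
      rw [← pow_lt_pow_iff_left₀ g0 hu (n := 4) (by norm_num),
        ← pow_lt_pow_iff_left₀ (by linarith) q0 (n := 4) (by norm_num), g4, qA_pow,
        sub_lt_iff_lt_add, Real.sqrt_lt' (by positivity)]
      unfold p8u
      constructor <;> intro h <;> nlinarith
  have h4 : α₄ = ∫ t in (1:ℝ)..2, ∫ u in (0:ℝ)..1, (if t < qA u then 1 / √(p8u u) else 0) := by
    rw [hα₄]
    apply intervalIntegral.integral_congr
    intro t ht
    rw [uIcc_of_le (by norm_num)] at ht
    obtain ⟨a1, a2, a3⟩ := hgt t ht.1 ht.2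
    dsimp only
    rw [← int_ind' 0 1 (g t) a1 a2 _ hfc]
    apply intervalIntegral.integral_congr
    intro u hu
    rw [uIcc_of_le (by norm_num)] at hu
    simp only [a3 u hu.1]
  rw [intervalIntegral_intervalIntegral_swap] at h4
  · have h5 : α₄ = ∫ u in (0:ℝ)..1, (1 / qA u - 1 / √(p8u u)) := by
      rw [h4]
      apply intervalIntegral.integral_congr
      intro u hu
      rw [uIcc_of_le (by norm_num)] at hu
      dsimp only
      have e : ∫ t in (1:ℝ)..2, (if t < qA u then 1 / √(p8u u) else 0) =
        ∫ t in (1:ℝ)..2, (if t ≤ qA u then 1 / √(p8u u) else 0) := by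
        apply intervalIntegral.integral_congr_ae
        have : ∀ᵐ t : ℝ, t ≠ qA u := by simp [ae_iff]
        filter_upwards [this] with t ht _
        congr 1
        rw [lt_iff_le_and_ne]; simp [ht]
      rw [e, int_ind 1 2 (qA u) (qA_ge u) (qA_le hu.1 hu.2) _ continuous_const]
      rw [intervalIntegral.integral_const, qA_sq, smul_eq_mul]
      have := qA_ge u
      field_simp
    rw [h5, intervalIntegral.integral_sub (hqc.intervalIntegrable _ _) (hfc.intervalIntegrable _ _),
      hα₃]
    ring
  · apply integrable_of_bdd _ _ _ _ _ _ 1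
    · rintro ⟨t, u⟩ _
      simp only [Function.uncurry]
      split_ifs
      · rw [abs_of_nonneg (by positivity), div_le_one, Real.one_le_sqrt]
        · exact p8u_pos u
        · have := p8u_pos u; positivity
      · simp
    · apply Measurable.ite
      · exact measurableSet_lt measurable_fst (qA_cont.measurable.comp measurable_snd)
      · exact hfc.measurable.comp measurable_snd
      · exact measurable_const

lemma area_eq : aA = (∫ u in (0:ℝ)..1, 1 / qA u) / 2 := by
  have hpc : Continuous (fun x : ℝ × ℝ => x.1^8+14*x.1^4*x.2^4+x.2^8) := by fun_prop
  have hm : MeasurableSet {x : ℝ × ℝ | x.1^8+14*x.1^4*x.2^4+x.2^8 ≤ 1} :=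
    measurableSet_le hpc.measurable measurable_const
  have h1 : aA = ∫ v in (0:ℝ)..1, ∫ w in (0:ℝ)..1,
      (if v < w ∧ v^8+14*v^4*w^4+w^8 ≤ 1 then (1:ℝ) else 0) := by
    unfold aA
    apply intervalIntegral.integral_congr
    intro v hv
    rw [uIcc_of_le (by norm_num)] at hv
    dsimp only
    have hW : WfA v ≤ 1 := by
      rcases (WfA_le v).eq_or_lt with h | h
      · rw [← h]; exact hv.2
      · have h1 := (WfA_iff1 hv.1 h).2 le_rfl
        have w0 : 0 ≤ WfA v := hv.1.trans h.le
        have v0 := hv.1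
        apply le_of_pow_le_pow_left₀ (n := 8) (by norm_num) (by norm_num)
        have : 0 ≤ v^8+14*v^4*WfA v^4 := by positivity
        linarith
    have e : ∀ w, (if v < w ∧ v^8+14*v^4*w^4+w^8 ≤ 1 then (1:ℝ) else 0) =
        (if v < w then (1:ℝ) else 0) - (if WfA v < w then 1 else 0) := by
      intro w
      by_cases hvw : v < w
      · simp only [hvw, true_and, WfA_iff1 hv.1 hvw, if_true, ← not_le (a := w)]
        split_ifs <;> simp_all
      · have : ¬ (WfA v < w) := by linarith [WfA_le v]
        simp [hvw, this]
    simp_rw [e]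
    have hii : ∀ c : ℝ, IntervalIntegrable (fun w : ℝ => if c < w then (1:ℝ) else 0) volume 0 1 := by
      intro c
      apply Monotone.intervalIntegrable
      intro a b hab
      dsimp only
      split_ifs <;> first | linarith | norm_num
    rw [intervalIntegral.integral_sub (hii _) (hii _),
      int_ind' 0 1 v hv.1 hv.2 _ continuous_const,
      int_ind' 0 1 (WfA v) (hv.1.trans (WfA_le v)) hW _ continuous_const]
    simp [KfA]
  rw [h1, intervalIntegral_intervalIntegral_swap]
  · have h2 : ∀ w ∈ uIoc (0:ℝ) 1, ∫ v in (0:ℝ)..1, 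
        (if v < w ∧ v^8+14*v^4*w^4+w^8 ≤ 1 then (1:ℝ) else 0)
        = ∫ u in (0:ℝ)..1, (if w^8 * p8u u ≤ 1 then w else 0) := by
      intro w hw
      rw [uIoc_of_le (by norm_num)] at hw
      have w0 := hw.1
      have hii : ∀ a b : ℝ, IntervalIntegrable
          (fun v : ℝ => if v < w ∧ v^8+14*v^4*w^4+w^8 ≤ 1 then (1:ℝ) else 0) volume a b := by
        intro a b
        rw [intervalIntegrable_iff]
        apply Measure.integrableOn_of_bounded (M := 1)
        · simp [uIoc]
        · apply Measurable.aestronglyMeasurable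
          apply Measurable.ite _ measurable_const measurable_const
          have hcv : Continuous (fun v : ℝ => v^8+14*v^4*w^4+w^8) := by fun_prop
          exact measurableSet_Iio.inter (measurableSet_le hcv.measurable measurable_const)
        · refine Filter.Eventually.of_forall (fun t => ?_)
          split_ifs <;> simp
      rw [← intervalIntegral.integral_add_adjacent_intervals (hii 0 w) (hii w 1)]
      have z : ∫ v in w..1, (if v < w ∧ v^8+14*v^4*w^4+w^8 ≤ 1 then (1:ℝ) else 0) = 0 := by
        rw [intervalIntegral.integral_congr (g := fun _ => 0)]
        · simp
        · intro v hv
          rw [uIcc_of_le hw.2] at hv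
          simp [not_lt.2 hv.1]
      rw [z, add_zero]
      have := intervalIntegral.integral_comp_mul_right (a := 0) (b := 1)
        (fun v : ℝ => if v < w ∧ v^8+14*v^4*w^4+w^8 ≤ 1 then (1:ℝ) else 0) w0.ne'
      rw [zero_mul, one_mul, smul_eq_mul] at this
      have h3 : ∫ v in (0:ℝ)..w, (if v < w ∧ v^8+14*v^4*w^4+w^8 ≤ 1 then (1:ℝ) else 0)
        = w * ∫ x in (0:ℝ)..1, (if x * w < w ∧ (x*w)^8+14*(x*w)^4*w^4+w^8 ≤ 1 then (1:ℝ) else 0) := by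
        rw [this]; field_simp
      rw [h3, ← intervalIntegral.integral_const_mul]
      apply intervalIntegral.integral_congr_ae
      have : ∀ᵐ t : ℝ, t ≠ 1 := by simp [ae_iff]
      filter_upwards [this] with u hu1 hu
      rw [uIoc_of_le (by norm_num)] at hu
      have : u * w < w := by
        have := lt_of_le_of_ne hu.2 hu1
        nlinarith
      have e : (u*w)^8+14*(u*w)^4*w^4+w^8 = w^8 * p8u u := by unfold p8u; ring
      rw [e]
      simp [this]
    rw [intervalIntegral.integral_congr_ae (Filter.Eventually.of_forall h2),
      intervalIntegral_intervalIntegral_swap]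
    · rw [← intervalIntegral.integral_div]
      apply intervalIntegral.integral_congr
      intro u hu
      rw [uIcc_of_le (by norm_num)] at hu
      dsimp only
      have q1 := qA_ge u
      have b0 : 0 ≤ 1 / √(qA u) := by positivity
      have b1 : 1 / √(qA u) ≤ 1 := by
        rw [div_le_one (by positivity), Real.one_le_sqrt]; exact q1
      have b2 : (1 / √(qA u))^2 = 1 / qA u := by
        rw [div_pow, Real.sq_sqrt (by linarith), one_pow]
      have e : ∫ w in (0:ℝ)..1, (if w^8 * p8u u ≤ 1 then w else 0) = 
          ∫ w in (0:ℝ)..1, (if w ≤ 1 / √(qA u) then w else 0) := by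
        apply intervalIntegral.integral_congr
        intro w hw
        rw [uIcc_of_le (by norm_num)] at hw
        dsimp only
        congr 1
        have : w ≤ 1 / √(qA u) ↔ w^8 * p8u u ≤ 1 := by
          rw [← pow_le_pow_iff_left₀ hw.1 b0 (n := 8) (by norm_num),
            show (8:ℕ) = 2 * 4 from rfl, pow_mul (1 / √(qA u)), b2, div_pow, qA_pow, one_pow,
            le_div_iff₀]
          linarith [p8u_pos u]
        rw [this]
      rw [e, int_ind 0 1 _ b0 b1 (fun w => w) continuous_id, integral_id, b2]
      ring
    · apply integrable_of_bdd _ _ _ _ _ _ 1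
      · rintro ⟨w, u⟩ ⟨hw, _⟩
        rw [uIoc_of_le (by norm_num)] at hw
        simp only at hw
        simp only [Function.uncurry]
        split_ifs
        · rw [abs_of_nonneg hw.1.le]; exact hw.2
        · simp
      · apply Measurable.ite
        · refine measurableSet_le (Continuous.measurable ?_) measurable_const
          have := p8u_cont
          fun_prop
        · exact measurable_fst
        · exact measurable_const
  · apply integrable_of_bdd _ _ _ _ _ _ 1
    · rintro ⟨w, u⟩ _
      simp only [Function.uncurry]
      split_ifs <;> simp
    · apply Measurable.ite _ measurable_const measurable_const
      exact (measurableSet_lt measurable_fst measurable_snd).inter hm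
end part_d

section part_e
open MeasureTheory Set

lemma mem_QfA {i j : ℤ} {s : ℝ} (hs : 0 ≤ s) (q : ℤ × ℤ) : q ∈ QfA i j (s^((1:ℝ)/8)) ↔
    1 ≤ q.1 ∧ q.1 < q.2 ∧ Int.gcd q.1 q.2 = 1 ∧ p8R q.1 q.2 ≤ s ∧ q.1 % 2 = i ∧ q.2 % 2 = j := by
  unfold QfA
  rw [Finset.mem_filter, mem_PfA (by positivity)]
  have : (s^((1:ℝ)/8))^8 = s := by
    rw [← Real.rpow_natCast, ← Real.rpow_mul hs]; norm_num
  rw [this]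
  tauto

lemma lint_one (y p : ℝ) (hy : 0 < y) (hp : y < p) :
    ∫⁻ s in Ioi y, (if p ≤ s then ENNReal.ofReal (1/2 * s^(-(3:ℝ)/2)) else 0) =
      ENNReal.ofReal (1 / √p) := by
  have p0 : 0 < p := hy.trans hp
  have e : ∀ s : ℝ, (if p ≤ s then ENNReal.ofReal (1/2 * s^(-(3:ℝ)/2)) else 0) =
    (Ici p).indicator (fun s => ENNReal.ofReal (1/2 * s^(-(3:ℝ)/2))) s := by
    intro s; simp [indicator]
  simp_rw [e]
  rw [lintegral_indicator measurableSet_Ici, Measure.restrict_restrict measurableSet_Ici,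
    inter_eq_left.2 (Ici_subset_Ioi.2 hp), restrict_Ioi_eq_restrict_Ici.symm]
  rw [← ofReal_integral_eq_lintegral_ofReal]
  · rw [integral_const_mul, integral_Ioi_rpow_of_lt (by norm_num) p0]
    congr 1
    rw [Real.sqrt_eq_rpow, one_div (p ^ _), ← Real.rpow_neg p0.le]
    norm_num
    ring
  · exact (integrableOn_Ioi_rpow_of_lt (by norm_num) p0).const_mul _
  · rw [Filter.EventuallyLE, ae_restrict_iff' measurableSet_Ioi]
    refine Filter.Eventually.of_forall (fun s hs => ?_)
    have : 0 < s := p0.trans hs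
    simp only [Pi.zero_apply]
    positivity

noncomputable def MfA (i j : ℤ) (s : ℝ) : ℝ := ((QfA i j (s^((1:ℝ)/8))).card : ℝ)

lemma QfA_mono {i j : ℤ} {s t : ℝ} (hs : 0 ≤ s) (hst : s ≤ t) :
    QfA i j (s^((1:ℝ)/8)) ⊆ QfA i j (t^((1:ℝ)/8)) := by
  intro q hq
  rw [mem_QfA hs] at hq
  rw [mem_QfA (hs.trans hst)]
  obtain ⟨h1, h2, h3, h4, h5⟩ := hq
  exact ⟨h1, h2, h3, h4.trans hst, h5⟩

lemma MfA_mono {i j : ℤ} {s t : ℝ} (hs : 0 ≤ s) (hst : s ≤ t) : MfA i j s ≤ MfA i j t := by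
  unfold MfA
  exact_mod_cast Finset.card_le_card (QfA_mono hs hst)

lemma tsum_eq_int (i j : ℤ) (y : ℝ) (hy : 2 ≤ y) :
    (∑' q : {q : ℤ × ℤ // 1 ≤ q.1 ∧ q.1 < q.2 ∧ Int.gcd q.1 q.2 = 1 ∧
          y < p8R q.1 q.2 ∧ q.1 % 2 = i ∧ q.2 % 2 = j},
          1 / Real.sqrt (p8R q.1.1 q.1.2)) =
    ∫ s in Ioi y, 1/2 * s^(-(3:ℝ)/2) * (MfA i j s - MfA i j y) := by
  have y0 : 0 < y := by linarith
  rw [integral_eq_lintegral_of_nonneg_ae]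
  · have e1 : ∀ q : {q : ℤ × ℤ // 1 ≤ q.1 ∧ q.1 < q.2 ∧ Int.gcd q.1 q.2 = 1 ∧
          y < p8R q.1 q.2 ∧ q.1 % 2 = i ∧ q.2 % 2 = j}, 1 / Real.sqrt (p8R q.1.1 q.1.2) =
        (∫⁻ s in Ioi y, (if p8R q.1.1 q.1.2 ≤ s then ENNReal.ofReal (1/2 * s^(-(3:ℝ)/2)) else 0)).toReal := by
      intro q
      rw [lint_one y _ y0 q.2.2.2.2.1, ENNReal.toReal_ofReal (by positivity)]
    simp_rw [e1]
    rw [← ENNReal.tsum_toReal_eq]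
    · congr 1
      rw [← lintegral_tsum]
      · apply setLIntegral_congr_fun measurableSet_Ioi
        intro s hs
        have hs' : y < s := hs
        have s0 : 0 < s := y0.trans hs
        dsimp only
        have hsub := QfA_mono (i := i) (j := j) y0.le hs'.le
        have hM : MfA i j s - MfA i j y =
          ((QfA i j (s^((1:ℝ)/8)) \ QfA i j (y^((1:ℝ)/8))).card : ℝ) := by
          unfold MfA
          rw [Finset.card_sdiff_of_subset hsub, Nat.cast_sub (Finset.card_le_card hsub)]
        rw [hM]
        have t1 := tsum_subtype {q : ℤ × ℤ | 1 ≤ q.1 ∧ q.1 < q.2 ∧ Int.gcd q.1 q.2 = 1 ∧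
          y < p8R q.1 q.2 ∧ q.1 % 2 = i ∧ q.2 % 2 = j} (fun q : ℤ × ℤ =>
          (if p8R q.1 q.2 ≤ s then ENNReal.ofReal (1/2 * s^(-(3:ℝ)/2)) else 0))
        refine Eq.trans t1 ?_
        rw [tsum_eq_sum (s := QfA i j (s^((1:ℝ)/8)) \ QfA i j (y^((1:ℝ)/8)))]
        · rw [Finset.sum_congr rfl (g := fun _ => ENNReal.ofReal (1/2 * s^(-(3:ℝ)/2)))]
          · rw [Finset.sum_const, nsmul_eq_mul, mul_comm,
              ENNReal.ofReal_mul (p := 1/2 * s^(-(3:ℝ)/2)) (by positivity),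
              ENNReal.ofReal_natCast]
          · intro q hq
            rw [Finset.mem_sdiff, mem_QfA s0.le, mem_QfA y0.le] at hq
            obtain ⟨⟨h1, h2, h3, h4, h5, h6⟩, h7⟩ := hq
            have h8 : y < p8R q.1 q.2 := by
              by_contra h
              exact h7 ⟨h1, h2, h3, not_lt.1 h, h5, h6⟩
            rw [indicator_of_mem, if_pos h4]
            exact ⟨h1, h2, h3, h8, h5, h6⟩
        · intro q hq
          rw [Finset.mem_sdiff, mem_QfA s0.le, mem_QfA y0.le] at hq
          rw [indicator_apply]
          split_ifs with h1 h2
          · exfalso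
            obtain ⟨a1, a2, a3, a4, a5, a6⟩ := h1
            apply hq
            refine ⟨⟨a1, a2, a3, h2, a5, a6⟩, ?_⟩
            rintro ⟨_, _, _, a7, _⟩
            linarith
          · rfl
          · rfl
      · intro q
        apply Measurable.aemeasurable
        apply Measurable.ite measurableSet_Ici _ measurable_const
        fun_prop
    · intro q
      rw [lint_one y _ y0 q.2.2.2.2.1]
      exact ENNReal.ofReal_ne_top
  · rw [Filter.EventuallyLE, ae_restrict_iff' measurableSet_Ioi]
    refine Filter.Eventually.of_forall (fun s hs => ?_)
    have hs' : y < s := hs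
    have : 0 < s := y0.trans hs
    have := MfA_mono (i := i) (j := j) y0.le hs'.le
    simp only [Pi.zero_apply]
    apply mul_nonneg (by positivity) (by linarith)
  · apply AEMeasurable.aestronglyMeasurable
    apply AEMeasurable.mul
    · apply Measurable.aemeasurable; fun_prop
    · apply AEMeasurable.sub _ aemeasurable_const
      apply aemeasurable_restrict_of_monotoneOn measurableSet_Ioi
      intro a ha b hb hab
      exact MfA_mono (y0.trans ha).le hab

lemma int_bound (i j : ℤ) (y c E : ℝ) (hy : 2 ≤ y)
    (hM : ∀ s, y ≤ s → |MfA i j s - c * s^((1:ℝ)/4)| ≤ E * s^((1:ℝ)/4)) :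
    |(∫ s in Ioi y, 1/2 * s^(-(3:ℝ)/2) * (MfA i j s - MfA i j y)) - c * y^(-(1:ℝ)/4)| ≤
      3 * E * y^(-(1:ℝ)/4) := by
  have y0 : 0 < y := by linarith
  have I1 : IntegrableOn (fun s : ℝ => s^(-(3:ℝ)/2)) (Ioi y) :=
    integrableOn_Ioi_rpow_of_lt (by norm_num) y0
  have I2 : IntegrableOn (fun s : ℝ => s^(-(5:ℝ)/4)) (Ioi y) :=
    integrableOn_Ioi_rpow_of_lt (by norm_num) y0
  have v1 : ∫ s in Ioi y, s^(-(3:ℝ)/2) = 2 * y^(-(1:ℝ)/2) := by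
    rw [integral_Ioi_rpow_of_lt (by norm_num) y0]; norm_num; ring
  have v2 : ∫ s in Ioi y, s^(-(5:ℝ)/4) = 4 * y^(-(1:ℝ)/4) := by
    rw [integral_Ioi_rpow_of_lt (by norm_num) y0]; norm_num; ring
  have yy : y^((1:ℝ)/4) * y^(-(1:ℝ)/2) = y^(-(1:ℝ)/4) := by
    rw [← Real.rpow_add y0]; norm_num
  -- model integrals
  have mI : ∀ a : ℝ, ∀ b : ℝ, IntegrableOn (fun s : ℝ => a / 2 * s^(-(5:ℝ)/4) + b / 2 * y^((1:ℝ)/4) * s^(-(3:ℝ)/2)) (Ioi y) :=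
    fun a b => (I2.const_mul _).add (I1.const_mul _)
  have mv : ∀ a b : ℝ, ∫ s in Ioi y, (a / 2 * s^(-(5:ℝ)/4) + b / 2 * y^((1:ℝ)/4) * s^(-(3:ℝ)/2)) =
      (2 * a + b) * y^(-(1:ℝ)/4) := by
    intro a b
    rw [integral_add (I2.const_mul _) (I1.const_mul _), integral_const_mul, integral_const_mul,
      v1, v2]
    linear_combination b * yy
  have pt : ∀ s ∈ Ioi y, |1/2 * s^(-(3:ℝ)/2) * (MfA i j s - MfA i j y) -
      (c / 2 * s^(-(5:ℝ)/4) + (-c) / 2 * y^((1:ℝ)/4) * s^(-(3:ℝ)/2))| ≤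
      E / 2 * s^(-(5:ℝ)/4) + E / 2 * y^((1:ℝ)/4) * s^(-(3:ℝ)/2) := by
    intro s hs
    have hs' : y < s := hs
    have s0 : 0 < s := y0.trans hs
    have e : s^(-(5:ℝ)/4) = s^(-(3:ℝ)/2) * s^((1:ℝ)/4) := by
      rw [← Real.rpow_add s0]; norm_num
    rw [e]
    have h1 := hM s hs'.le
    have h2 := hM y le_rfl
    have hp : 0 ≤ s^(-(3:ℝ)/2) := by positivity
    have e2 : 1/2 * s^(-(3:ℝ)/2) * (MfA i j s - MfA i j y) -
      (c / 2 * (s^(-(3:ℝ)/2) * s^((1:ℝ)/4)) + (-c) / 2 * y^((1:ℝ)/4) * s^(-(3:ℝ)/2)) =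
      1/2 * s^(-(3:ℝ)/2) * ((MfA i j s - c * s^((1:ℝ)/4)) - (MfA i j y - c * y^((1:ℝ)/4))) := by ring
    rw [e2, abs_mul, abs_of_nonneg (by positivity : 0 ≤ 1/2 * s^(-(3:ℝ)/2))]
    calc _ ≤ 1/2 * s^(-(3:ℝ)/2) * (E * s^((1:ℝ)/4) + E * y^((1:ℝ)/4)) := by
          apply mul_le_mul_of_nonneg_left _ (by positivity)
          exact (abs_sub _ _).trans (add_le_add h1 h2)
      _ = _ := by ring
  have hmeas : AEStronglyMeasurable (fun s => 1/2 * s^(-(3:ℝ)/2) * (MfA i j s - MfA i j y)) (volume.restrict (Ioi y)) := by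
    apply AEMeasurable.aestronglyMeasurable
    apply AEMeasurable.mul
    · apply Measurable.aemeasurable; fun_prop
    · apply AEMeasurable.sub _ aemeasurable_const
      apply aemeasurable_restrict_of_monotoneOn measurableSet_Ioi
      intro a ha b hb hab
      exact MfA_mono (y0.trans ha).le hab
  have hd : IntegrableOn (fun s => 1/2 * s^(-(3:ℝ)/2) * (MfA i j s - MfA i j y) -
      (c / 2 * s^(-(5:ℝ)/4) + (-c) / 2 * y^((1:ℝ)/4) * s^(-(3:ℝ)/2))) (Ioi y) := by
    apply Integrable.mono' (mI E E) (hmeas.sub (mI c (-c)).1)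
    rw [ae_restrict_iff' measurableSet_Ioi]
    exact Filter.Eventually.of_forall pt
  have hf : IntegrableOn (fun s => 1/2 * s^(-(3:ℝ)/2) * (MfA i j s - MfA i j y)) (Ioi y) := by
    refine (hd.add (mI c (-c))).congr (Filter.Eventually.of_forall (fun s => ?_))
    simp only [Pi.add_apply]; ring
  have r1 : c * y^(-(1:ℝ)/4) = ∫ s in Ioi y, (c / 2 * s^(-(5:ℝ)/4) + (-c) / 2 * y^((1:ℝ)/4) * s^(-(3:ℝ)/2)) := by
    rw [mv]; ring
  have r2 : 3 * E * y^(-(1:ℝ)/4) = ∫ s in Ioi y, (E / 2 * s^(-(5:ℝ)/4) + E / 2 * y^((1:ℝ)/4) * s^(-(3:ℝ)/2)) := by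
    rw [mv]; ring
  rw [r1, ← integral_sub hf (mI c (-c)), r2]
  rw [← Real.norm_eq_abs]
  apply norm_integral_le_of_norm_le (mI E E)
  rw [ae_restrict_iff' measurableSet_Ioi]
  exact Filter.Eventually.of_forall pt

lemma MfA_bound {i j : ℤ} (hij : ¬(i = 0 ∧ j = 0)) (hi : i = 0 ∨ i = 1) (hj : j = 0 ∨ j = 1)
    (z2 : ℝ) (hz2 : (z2 : ℂ) = riemannZeta 2) (y s : ℝ) (hy : 2 ≤ y) (hs : y ≤ s) :
    |MfA i j s - aA / (3 * z2) * s^((1:ℝ)/4)| ≤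
      ((6 + |aA|) * (9 + Real.log y) * y^(-(1:ℝ)/8)) * s^((1:ℝ)/4) := by
  have y0 : 0 < y := by linarith
  have s0 : 0 < s := by linarith
  set r := s^((1:ℝ)/8) with hr
  have r1 : 1 ≤ r := Real.one_le_rpow (by linarith) (by norm_num)
  have r2 : r^2 = s^((1:ℝ)/4) := by
    rw [hr, ← Real.rpow_natCast, ← Real.rpow_mul s0.le]; norm_num
  have h := QfA_asymp hij hi hj z2 hz2 r1
  rw [r2] at h
  refine h.trans ?_
  have ly : 0 ≤ Real.log y := Real.log_nonneg (by linarith)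
  have ls : Real.log r = 1/8 * Real.log s := by rw [hr, Real.log_rpow s0]
  set x := (s/y)^((1:ℝ)/8) with hx
  have sy : 1 ≤ s / y := by rw [one_le_div y0]; exact hs
  have x1 : 1 ≤ x := Real.one_le_rpow sy (by norm_num)
  have hl : Real.log (s/y) ≤ 8 * x := by
    have := Real.log_le_rpow_div (x := s/y) (by positivity) (ε := 1/8) (by norm_num)
    rw [← hx] at this
    linarith
  rw [Real.log_div s0.ne' y0.ne'] at hl
  have hr2 : y^(-(1:ℝ)/8) * s^((1:ℝ)/4) = r * x := by
    rw [← r2, hx, Real.div_rpow s0.le y0.le, ← hr, neg_div, Real.rpow_neg y0.le]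
    field_simp
  have lr : Real.log r ≤ Real.log s := by
    have : 0 ≤ Real.log s := Real.log_nonneg (by linarith)
    linarith
  have h9 : 1 + Real.log r ≤ (9 + Real.log y) * x := by nlinarith
  have h10 : 0 ≤ Real.log r := Real.log_nonneg r1
  calc 6 * r * (1 + Real.log r) + |aA| * r ≤ (6 + |aA|) * r * (1 + Real.log r) := by
        have : 0 ≤ |aA| * r * Real.log r := by positivity
        nlinarith
    _ ≤ (6 + |aA|) * r * ((9 + Real.log y) * x) := by
        apply mul_le_mul_of_nonneg_left h9; positivity
    _ = (6 + |aA|) * (9 + Real.log y) * (r * x) := by ring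
    _ = _ := by rw [← hr2]; ring

theorem stmt13 (z2 : ℝ) (hz2 : (z2 : ℂ) = riemannZeta 2)
    (α₃ α₄ : ℝ) (g : ℝ → ℝ)
    (hg : ∀ t, g t = (Real.sqrt (t ^ 4 + 48) - 7) ^ ((1 : ℝ) / 4))
    (hα₃ : α₃ = ∫ u in (0 : ℝ)..1, 1 / Real.sqrt (p8u u))
    (hα₄ : α₄ = ∫ t in (1 : ℝ)..2, ∫ u in g t..1, 1 / Real.sqrt (p8u u)) :
    ∃ C > 0, ∀ y : ℝ, 2 ≤ y → ∀ i j : ℤ,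
      (i = 0 ∨ i = 1) → (j = 0 ∨ j = 1) → ¬(i = 0 ∧ j = 0) →
      |(∑' q : {q : ℤ × ℤ // 1 ≤ q.1 ∧ q.1 < q.2 ∧ Int.gcd q.1 q.2 = 1 ∧
          y < p8R q.1 q.2 ∧ q.1 % 2 = i ∧ q.2 % 2 = j},
          1 / Real.sqrt (p8R q.1.1 q.1.2)) -
        (α₃ + α₄) / (6 * z2 * y ^ ((1 : ℝ) / 4))| ≤ C * Real.log y * y ^ (-(3 : ℝ) / 8) := by
  refine ⟨57 * (6 + |aA|), by positivity, ?_⟩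
  intro y hy i j hi hj hij
  have y0 : 0 < y := by linarith
  have ha : α₃ + α₄ = 2 * aA := by
    rw [alpha_sum α₃ α₄ g hg hα₃ hα₄, area_eq]; ring
  have hmain : (α₃ + α₄) / (6 * z2 * y ^ ((1 : ℝ) / 4)) = aA / (3 * z2) * y^(-(1:ℝ)/4) := by
    rw [ha, neg_div, Real.rpow_neg y0.le, show (6:ℝ) * z2 * y ^ ((1 : ℝ) / 4) = 2 * (3 * z2 * y ^ ((1 : ℝ) / 4)) by ring,
      mul_div_mul_left _ _ (by norm_num : (2:ℝ) ≠ 0), div_mul_eq_div_div, div_eq_mul_inv (aA / _)]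
  rw [hmain, tsum_eq_int i j y hy]
  refine (int_bound i j y _ _ hy (fun s hs => MfA_bound hij hi hj z2 hz2 y s hy hs)).trans ?_
  have e : y^(-(1:ℝ)/8) * y^(-(1:ℝ)/4) = y^(-(3:ℝ)/8) := by
    rw [← Real.rpow_add y0]; norm_num
  have l2 : 1/2 ≤ Real.log y := by
    have := Real.log_two_gt_d9
    have := Real.log_le_log (by norm_num) hy
    linarith
  calc _ = 3 * (6 + |aA|) * (9 + Real.log y) * (y^(-(1:ℝ)/8) * y^(-(1:ℝ)/4)) := by ring
    _ = 3 * (6 + |aA|) * (9 + Real.log y) * y^(-(3:ℝ)/8) := by rw [e]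
    _ ≤ 3 * (6 + |aA|) * (19 * Real.log y) * y^(-(3:ℝ)/8) := by
        gcongr
        linarith
    _ = _ := by ring

end part_e
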